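/- arXiv:math/0504577 — 5 statements merged into one kernel-verified Lean document; each statement's English description precedes it below -/
import Mathlib

section
/- Let X be a metric space, let 𝒰 be a cover of X by uniformly bounded sets with multiplicity at most m, suppose every subset of X of diameter at most L is contained in some member of 𝒰 (i.e. 𝒰 has Lebesgue number at least L), and let k > 0 satisfy 4k ≤ L. Then the family 𝒱 = { X \ N_k(X \ U) : U ∈ 𝒰 } (where N_k denotes the open k-neighborhood) is a cover of X by uniformly bounded sets, every subset of X of diameter strictly less than L − 2k is contained in some member of 𝒱, and the k-multiplicity of 𝒱 is at most m. -/
open Metric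

namespace AsDim

/-- A family of subsets is a cover if its union is everything. -/
def IsCover {X : Type*} (𝒰 : Set (Set X)) : Prop := ⋃₀ 𝒰 = Set.univ

/-- A family of subsets of a metric space is uniformly bounded if there is a
common finite bound on the diameters of its members. -/
def UnifBounded {X : Type*} [MetricSpace X] (𝒰 : Set (Set X)) : Prop :=
  ∃ B : ℝ, 0 ≤ B ∧ ∀ U ∈ 𝒰, EMetric.diam U ≤ ENNReal.ofReal B

/-- A family has Lebesgue number at least `lam` if every subset of diameter at most
`lam` is contained in some member of the family. -/
def LebesgueGE {X : Type*} [MetricSpace X] (𝒰 : Set (Set X)) (lam : ℝ) : Prop :=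
  ∀ A : Set X, EMetric.diam A ≤ ENNReal.ofReal lam → ∃ U ∈ 𝒰, A ⊆ U

/-- The multiplicity of a family: the supremum over points of the number of
members containing that point. -/
noncomputable def mult {X : Type*} (𝒰 : Set (Set X)) : ℕ∞ :=
  ⨆ x : X, {U | U ∈ 𝒰 ∧ x ∈ U}.encard

/-- The asymptotic dimension function:
`ad_X(lam) = min { mult 𝒰 : 𝒰 a uniformly bounded cover with Lebesgue number ≥ lam } - 1`. -/
noncomputable def adFun (X : Type*) [MetricSpace X] (lam : ℝ) : ℕ∞ :=
  sInf {m : ℕ∞ | ∃ 𝒰 : Set (Set X),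
    IsCover 𝒰 ∧ UnifBounded 𝒰 ∧ LebesgueGE 𝒰 lam ∧ m = mult 𝒰} - 1

/-- `f ≼ g` : there is `k ∈ ℕ` with `f x ≤ k * g (k*x+k) + k` for all `x > 0`. -/
def GrowLE (f g : ℝ → ℕ∞) : Prop :=
  ∃ k : ℕ, ∀ x : ℝ, 0 < x → f x ≤ (k : ℕ∞) * g ((k : ℝ) * x + (k : ℝ)) + (k : ℕ∞)

/-- `f ≈ g` : same growth. -/
def GrowEquiv (f g : ℝ → ℕ∞) : Prop := GrowLE f g ∧ GrowLE g f

/-- `asdim X ≤ n`. -/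
def AsdimLE (X : Type*) [MetricSpace X] (n : ℕ) : Prop :=
  ∀ lam : ℝ, 0 < lam → ∃ 𝒰 : Set (Set X),
    IsCover 𝒰 ∧ UnifBounded 𝒰 ∧ LebesgueGE 𝒰 lam ∧ mult 𝒰 ≤ (n : ℕ∞) + 1

/-- Bounded geometry (as a discrete space): uniform finite bound on the
cardinality of balls of each radius. -/
def BoundedGeometry (X : Type*) [MetricSpace X] : Prop :=
  ∀ r : ℝ, 0 < r → ∃ c : ℕ, ∀ x : X, (Metric.closedBall x r).encard ≤ (c : ℕ∞)

/-- `(lam, eps, C)`-quasi-isometry. -/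
def IsQuasiIsometry {X Y : Type*} [MetricSpace X] [MetricSpace Y]
    (lam eps C : ℝ) (f : X → Y) : Prop :=
  1 ≤ lam ∧ 0 ≤ eps ∧ 0 ≤ C ∧
  (∀ x x' : X, (1 / lam) * dist x x' - eps ≤ dist (f x) (f x') ∧
      dist (f x) (f x') ≤ lam * dist x x' + eps) ∧
  (∀ y : Y, ∃ x : X, dist y (f x) ≤ C)

/-- Two metric spaces are quasi-isometric if some quasi-isometry exists. -/
def QuasiIsometric (X Y : Type*) [MetricSpace X] [MetricSpace Y] : Prop :=
  ∃ (lam eps C : ℝ) (f : X → Y), IsQuasiIsometry lam eps C f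

/-- Word distance with respect to a generating set `S`. -/
noncomputable def wordDist {Γ : Type*} [Group Γ] (S : Set Γ) (g h : Γ) : ℕ :=
  sInf {n : ℕ | ∃ l : List Γ, (∀ x ∈ l, x ∈ S) ∧ l.length = n ∧ l.prod = g⁻¹ * h}

/-- The metric on the group `Γ` is the word metric of the finite symmetric
generating set `S`. -/
def IsWordMetric {Γ : Type*} [Group Γ] [MetricSpace Γ] (S : Finset Γ) : Prop :=
  (∀ s ∈ S, s⁻¹ ∈ S) ∧ Subgroup.closure (S : Set Γ) = ⊤ ∧
  ∀ g h : Γ, dist g h = wordDist (S : Set Γ) g h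

end AsDim

namespace AsDim

/-- The open `k`-neighborhood of a set. -/
def nbhd {X : Type*} [MetricSpace X] (k : ℝ) (A : Set X) : Set X :=
  {x : X | ∃ a ∈ A, dist x a < k}

/-- Shrinking a cover: removing open `k`-neighborhoods of complements yields a
uniformly bounded cover with Lebesgue number at least `L - 2k` and
`k`-multiplicity at most the multiplicity of the original cover. -/
theorem shrinking_cover {X : Type*} [MetricSpace X] (𝒰 : Set (Set X)) (m : ℕ∞)
    (L k : ℝ)
    (hcover : IsCover 𝒰) (hbdd : UnifBounded 𝒰) (hmult : mult 𝒰 ≤ m)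
    (hLeb : LebesgueGE 𝒰 L) (hk : 0 < k) (hkL : 4 * k ≤ L) :
    IsCover ((fun U : Set X => (nbhd k Uᶜ)ᶜ) '' 𝒰) ∧
    UnifBounded ((fun U : Set X => (nbhd k Uᶜ)ᶜ) '' 𝒰) ∧
    (∀ A : Set X, EMetric.diam A < ENNReal.ofReal (L - 2 * k) →
      ∃ V ∈ (fun U : Set X => (nbhd k Uᶜ)ᶜ) '' 𝒰, A ⊆ V) ∧
    (∀ x : X,
      {V | V ∈ (fun U : Set X => (nbhd k Uᶜ)ᶜ) '' 𝒰 ∧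
        (V ∩ Metric.ball x k).Nonempty}.encard ≤ m) := by
  have key : ∀ A : Set X, EMetric.diam A < ENNReal.ofReal (L - 2 * k) →
      ∃ V ∈ (fun U : Set X => (nbhd k Uᶜ)ᶜ) '' 𝒰, A ⊆ V := by
    intro A hA
    obtain ⟨U, hU, hAU⟩ := hLeb (nbhd k A) (by
      refine Metric.ediam_le ?_
      rintro x ⟨a, ha, hxa⟩ y ⟨b, hb, hyb⟩
      have h1 : edist a b ≤ ENNReal.ofReal (L - 2 * k) :=
        (Metric.edist_le_ediam_of_mem ha hb).trans hA.le
      rw [edist_dist] at h1 ⊢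
      have h2 : dist a b ≤ L - 2 * k :=
        (ENNReal.ofReal_le_ofReal_iff (by linarith)).1 h1
      apply ENNReal.ofReal_le_ofReal
      have h3 := dist_triangle4 x a b y
      rw [dist_comm b y] at h3
      linarith)
    refine ⟨_, ⟨U, hU, rfl⟩, ?_⟩
    rintro a ha ⟨b, hb, hab⟩
    exact hb (hAU ⟨a, ha, by rwa [dist_comm]⟩)
  refine ⟨?_, ?_, key, ?_⟩
  · refine Set.eq_univ_of_forall fun x => ?_
    obtain ⟨V, hV, hxV⟩ := key {x} (by
      refine (Metric.ediam_singleton (x := x)).trans_lt ?_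
      exact ENNReal.ofReal_pos.2 (by linarith))
    exact ⟨V, hV, hxV rfl⟩
  · obtain ⟨B, hB, h⟩ := hbdd
    refine ⟨B, hB, ?_⟩
    rintro _ ⟨U, hU, rfl⟩
    refine (Metric.ediam_mono ?_).trans (h U hU)
    intro x hx
    by_contra hxU
    exact hx ⟨x, hxU, by simpa using hk⟩
  · intro x
    refine le_trans ?_ ((le_iSup (fun x : X => {U | U ∈ 𝒰 ∧ x ∈ U}.encard) x).trans hmult)
    refine le_trans (Set.encard_le_encard ?_)
      (Set.encard_image_le (fun U : Set X => (nbhd k Uᶜ)ᶜ) _)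
    rintro _ ⟨⟨U, hU, rfl⟩, y, hy, hyx⟩
    refine ⟨U, ⟨hU, ?_⟩, rfl⟩
    by_contra hxU
    exact hy ⟨x, hxU, hyx⟩

end AsDim
end

section
/- Let X and Y be metric spaces with bounded geometry (as discrete spaces). If X and Y are quasi-isometric, then ad_X ≈ ad_Y, i.e. the asymptotic dimension functions of X and Y have the same growth. -/
open Metric

namespace AsDim

theorem growLE_of_coarse {X Y : Type*} [MetricSpace X] [MetricSpace Y] (f : X → Y)
    (L E : ℝ) (hL : 0 ≤ L) (hE : 0 ≤ E)
    (h1 : ∀ x x', dist (f x) (f x') ≤ L * dist x x' + E)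
    (h2 : ∀ x x', dist x x' ≤ L * dist (f x) (f x') + E) :
    GrowLE (adFun X) (adFun Y) := by
  obtain ⟨k, hk⟩ := exists_nat_ge (max 1 (max L E))
  have hk1 : (1 : ℝ) ≤ k := (le_max_left _ _).trans hk
  have hkL : L ≤ k := ((le_max_left _ _).trans (le_max_right _ _)).trans hk
  have hkE : E ≤ k := ((le_max_right _ _).trans (le_max_right _ _)).trans hk
  refine ⟨k, fun r hr => ?_⟩
  have key : adFun X r ≤ adFun Y ((k : ℝ) * r + k) := by
    unfold adFun
    refine tsub_le_tsub_right (le_sInf ?_) 1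
    rintro m ⟨𝒰, hc, ⟨B, hB, hU⟩, hLeb, rfl⟩
    refine le_trans (b := mult ((fun U => f ⁻¹' U) '' 𝒰))
      (sInf_le ⟨(fun U => f ⁻¹' U) '' 𝒰, ?_, ?_, ?_, rfl⟩) ?_
    · refine Set.eq_univ_of_forall fun x => ?_
      have hx : f x ∈ ⋃₀ 𝒰 := by
        rw [hc]
        trivial
      obtain ⟨U, hU', hxU⟩ := hx
      exact ⟨f ⁻¹' U, ⟨U, hU', rfl⟩, hxU⟩
    · refine ⟨L * B + E, by positivity, ?_⟩
      rintro _ ⟨U, hU', rfl⟩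
      refine Metric.ediam_le fun x hx y hy => ?_
      have hd : edist (f x) (f y) ≤ ENNReal.ofReal B :=
        (Metric.edist_le_ediam_of_mem (s := U) (x := f x) (y := f y) hx hy).trans (hU U hU')
      rw [edist_dist, ENNReal.ofReal_le_ofReal_iff hB] at hd
      rw [edist_dist]
      refine ENNReal.ofReal_le_ofReal ((h2 x y).trans ?_)
      gcongr
    · intro A hA
      obtain ⟨U, hU', hAU⟩ := hLeb (f '' A) (by
        refine Metric.ediam_le ?_
        rintro _ ⟨x, hx, rfl⟩ _ ⟨y, hy, rfl⟩
        have hd : edist x y ≤ ENNReal.ofReal r :=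
          (Metric.edist_le_ediam_of_mem hx hy).trans hA
        rw [edist_dist, ENNReal.ofReal_le_ofReal_iff hr.le] at hd
        rw [edist_dist]
        refine ENNReal.ofReal_le_ofReal ((h1 x y).trans ?_)
        gcongr)
      exact ⟨f ⁻¹' U, ⟨U, hU', rfl⟩, Set.image_subset_iff.mp hAU⟩
    · refine iSup_le fun x => ?_
      refine le_trans ?_ (le_iSup (fun y : Y => {U | U ∈ 𝒰 ∧ y ∈ U}.encard) (f x))
      refine le_trans (Set.encard_le_encard ?_)
        (Set.encard_image_le (fun U => f ⁻¹' U) {U | U ∈ 𝒰 ∧ f x ∈ U})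
      rintro _ ⟨⟨U, hU', rfl⟩, hx⟩
      exact ⟨U, ⟨hU', hx⟩, rfl⟩
  have hk1' : (1 : ℕ∞) ≤ (k : ℕ∞) := by exact_mod_cast hk1
  calc adFun X r ≤ 1 * adFun Y ((k : ℝ) * r + k) := by rwa [one_mul]
    _ ≤ k * adFun Y ((k : ℝ) * r + k) := by gcongr
    _ ≤ _ := le_self_add

/-- Growth of the asymptotic dimension function is a quasi-isometry invariant
of (discrete) metric spaces with bounded geometry. -/
theorem adFun_quasiIsometry_invariant {X Y : Type*} [MetricSpace X] [MetricSpace Y]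
    (hX : BoundedGeometry X) (hY : BoundedGeometry Y)
    (hQI : QuasiIsometric X Y) :
    GrowEquiv (adFun X) (adFun Y) := by
  obtain ⟨l, e, C, f, hl, he, hC, hf, hs⟩ := hQI
  have hl0 : 0 < l := by linarith
  have low : ∀ x x', dist x x' ≤ l * dist (f x) (f x') + l * e := by
    intro x x'
    have h := mul_le_mul_of_nonneg_left (hf x x').1 hl0.le
    have h' : l * (1 / l * dist x x' - e) = dist x x' - l * e := by
      field_simp
    linarith
  have hle : e ≤ l * e := le_mul_of_one_le_left he hl
  constructor
  · refine growLE_of_coarse f l (l * e) hl0.le (by positivity) (fun x x' => ?_) low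
    linarith [(hf x x').2]
  · choose g hg using hs
    refine growLE_of_coarse g l (l * (2 * C + e) + 2 * C) hl0.le (by positivity)
      (fun y y' => ?_) (fun y y' => ?_)
    · have t : dist (f (g y)) (f (g y')) ≤ dist y y' + 2 * C := by
        have := dist_triangle4 (f (g y)) y y' (f (g y'))
        rw [dist_comm (f (g y)) y] at this
        linarith [hg y, hg y']
      have := mul_le_mul_of_nonneg_left t hl0.le
      linarith [low (g y) (g y')]
    · have := dist_triangle4 y (f (g y)) (f (g y')) y'
      rw [dist_comm (f (g y')) y'] at this
      have hlC : 0 ≤ l * C := by positivity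
      linarith [hg y, hg y', (hf (g y) (g y')).2]

end AsDim
end

section
/- Let X = ⋃_α X_α be a metric space covered by a family of subsets {X_α}, and let ad, m_Y be functions defined for λ > 0 with values in ℕ. Suppose that for every λ > 0 there exist B(λ) ≥ λ, covers 𝒰_α of X_α (each with the subspace metric) by sets of diameter at most B(λ), with Lebesgue number greater than λ and multiplicity at most ad(λ), and a subset Y_λ ⊆ X such that the family { X_α \ Y_λ } is 3B(λ)-disjoint and Y_λ admits a uniformly bounded cover with Lebesgue number greater than λ and multiplicity at most m_Y(λ). Then ad_X ≼ λ ↦ max{ ad(λ), m_Y(λ) }, i.e. the asymptotic dimension function of X grows no faster than the maximum of ad and m_Y. -/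
open Metric

namespace AsDim

theorem diam_le_iff' {X : Type*} [MetricSpace X] (A : Set X) (c : ℝ) (hc : 0 ≤ c) :
    EMetric.diam A ≤ ENNReal.ofReal c ↔ ∀ x ∈ A, ∀ y ∈ A, dist x y ≤ c := by
  change Metric.ediam A ≤ ENNReal.ofReal c ↔ _
  rw [Metric.ediam_le_iff]
  constructor
  · intro h x hx y hy
    have := h x hx y hy
    rwa [edist_dist, ENNReal.ofReal_le_ofReal_iff hc] at this
  · intro h x hx y hy
    rw [edist_dist]
    exact ENNReal.ofReal_le_ofReal (h x hx y hy)

/-- Points of `X` within `s` of the `r`-interior of `V` in `Y`. -/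
def fat {X : Type*} [MetricSpace X] {Y : Set X} (r s : ℝ) (V : Set Y) : Set X :=
  {z | ∃ y : Y, (∀ w : Y, dist y w ≤ r → w ∈ V) ∧ dist z y ≤ s}

theorem exists_cover {X : Type*} [MetricSpace X] {ι : Type*} (Xa : ι → Set X)
    (hXcover : (⋃ i, Xa i) = Set.univ) (x lam B : ℝ) (hx : 0 < x) (hlam : 5 * x ≤ lam)
    (hB : lam ≤ B) (a m : ℕ) (𝒰 : ∀ i, Set (Set (Xa i)))
    (hUB : ∀ i, ∀ U ∈ 𝒰 i, EMetric.diam U ≤ ENNReal.ofReal B)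
    (hUL : ∀ i, ∃ L : ℝ, lam < L ∧ LebesgueGE (𝒰 i) L)
    (hUm : ∀ i, mult (𝒰 i) ≤ (a : ℕ∞))
    (Y : Set X)
    (hY : ∀ i j : ι, Xa i \ Y ≠ Xa j \ Y →
          ∀ x ∈ Xa i \ Y, ∀ y ∈ Xa j \ Y, 3 * B ≤ dist x y)
    (𝒱 : Set (Set ↥Y)) (hVB : UnifBounded 𝒱)
    (hVL : ∃ L : ℝ, lam < L ∧ LebesgueGE 𝒱 L) (hVm : mult 𝒱 ≤ (m : ℕ∞)) :
    ∃ 𝒲 : Set (Set X), IsCover 𝒲 ∧ UnifBounded 𝒲 ∧ LebesgueGE 𝒲 x ∧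
      mult 𝒲 ≤ (a : ℕ∞) + m := by
  set f : ι → Set X := fun i => Xa i \ Y with hf
  let ρ := Set.rangeSplitting f
  have hρ : ∀ S, f (ρ S) = S := Set.apply_rangeSplitting f
  let g : ∀ i, Set (Xa i) → Set X := fun i U => (Subtype.val '' U) \ Y
  let 𝒲₁ : Set (Set X) := {W | ∃ S : Set.range f, ∃ U ∈ 𝒰 (ρ S), g _ U = W}
  let 𝒲₂ : Set (Set X) := fat (2 * x) x '' 𝒱
  let 𝒲 : Set (Set X) := {∅} ∪ (𝒲₁ ∪ 𝒲₂)
  have hB0 : 0 < B := by linarith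
  have hleb : LebesgueGE 𝒲 x := by
    intro A hA
    rw [diam_le_iff' A x hx.le] at hA
    rcases A.eq_empty_or_nonempty with rfl | ⟨p, hp⟩
    · exact ⟨∅, Or.inl rfl, subset_rfl⟩
    by_cases hAY : ∃ q ∈ A, q ∈ Y
    · obtain ⟨q, hqA, hqY⟩ := hAY
      obtain ⟨L, hL, hVL⟩ := hVL
      obtain ⟨V, hV, hsub⟩ := hVL {w : Y | ∃ y : Y, (y : X) ∈ A ∧ dist y w ≤ 2 * x} (by
        rw [diam_le_iff' _ L (by linarith)]
        rintro w ⟨y, hy, hyw⟩ w' ⟨y', hy', hyw'⟩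
        have h1 : dist y y' ≤ x := hA _ hy _ hy'
        have h2 := dist_triangle4 w y y' w'
        rw [dist_comm w y] at h2
        linarith)
      refine ⟨fat (2 * x) x V, Or.inr (Or.inr ⟨V, hV, rfl⟩), ?_⟩
      intro z hz
      exact ⟨⟨q, hqY⟩, fun w hw => hsub ⟨⟨q, hqY⟩, hqA, hw⟩, hA _ hz _ hqA⟩
    · push Not at hAY
      obtain ⟨i, hi⟩ := Set.mem_iUnion.1 (hXcover ▸ Set.mem_univ p : p ∈ ⋃ i, Xa i)
      have hAi : A ⊆ f i := by
        intro z hz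
        obtain ⟨j, hj⟩ := Set.mem_iUnion.1 (hXcover ▸ Set.mem_univ z : z ∈ ⋃ i, Xa i)
        by_contra hcon
        have hne : f i ≠ f j := by
          intro h
          exact hcon (h ▸ ⟨hj, hAY z hz⟩)
        have h1 := hY i j hne p ⟨hi, hAY p hp⟩ z ⟨hj, hAY z hz⟩
        have h2 := hA p hp z hz
        linarith
      let S : Set.range f := ⟨f i, i, rfl⟩
      have hS : f (ρ S) = f i := hρ S
      rw [← hS] at hAi
      obtain ⟨L, hL, hUL⟩ := hUL (ρ S)
      obtain ⟨U, hU, hsub⟩ := hUL (Subtype.val ⁻¹' A) (by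
        rw [diam_le_iff' _ L (by linarith)]
        intro u hu v hv
        have : dist u v ≤ x := hA _ hu _ hv
        linarith)
      refine ⟨g _ U, Or.inr (Or.inl ⟨S, U, hU, rfl⟩), ?_⟩
      intro z hz
      have hz' := hAi hz
      exact ⟨⟨⟨z, hz'.1⟩, hsub hz, rfl⟩, hz'.2⟩
  refine ⟨𝒲, ?_, ?_, hleb, ?_⟩
  · refine Set.eq_univ_of_forall fun p => ?_
    obtain ⟨W, hW, hp⟩ := hleb {p} (by
      rw [diam_le_iff' _ x hx.le]
      rintro _ rfl _ rfl
      simpa using hx.le)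
    exact ⟨W, hW, hp rfl⟩
  · obtain ⟨C, hC, hVB⟩ := hVB
    refine ⟨B + C + 2 * x, by linarith, ?_⟩
    intro W hW
    rw [diam_le_iff' _ _ (by linarith)]
    rcases hW with hW | ⟨S, U, hU, rfl⟩ | ⟨V, hV, rfl⟩
    · intro u hu
      rw [Set.mem_singleton_iff.1 hW] at hu
      exact hu.elim
    · rintro _ ⟨⟨u, hu, rfl⟩, _⟩ _ ⟨⟨v, hv, rfl⟩, _⟩
      have : dist u v ≤ B := (diam_le_iff' _ B hB0.le).1 (hUB _ U hU) u hu v hv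
      have h2 : dist (u : X) v = dist u v := rfl
      linarith
    · rintro z ⟨y, hy, hzy⟩ z' ⟨y', hy', hzy'⟩
      have h1 : dist y y' ≤ C := (diam_le_iff' _ C hC).1 (hVB V hV) y
        (hy y (by simp; linarith)) y' (hy' y' (by simp; linarith))
      have h2 : dist (y : X) y' = dist y y' := rfl
      have h3 := dist_triangle4 z y y' z'
      rw [dist_comm (y' : X) z'] at h3
      linarith
  · refine iSup_le fun p => ?_
    have hsub : {W | W ∈ 𝒲 ∧ p ∈ W} ⊆ {W | W ∈ 𝒲₁ ∧ p ∈ W} ∪ {W | W ∈ 𝒲₂ ∧ p ∈ W} := by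
      rintro W ⟨hW | hW | hW, hp⟩
      · rw [Set.mem_singleton_iff.1 hW] at hp
        exact hp.elim
      · exact Or.inl ⟨hW, hp⟩
      · exact Or.inr ⟨hW, hp⟩
    refine (Set.encard_le_encard hsub).trans ((Set.encard_union_le _ _).trans (add_le_add ?_ ?_))
    · rcases Set.eq_empty_or_nonempty {W | W ∈ 𝒲₁ ∧ p ∈ W} with h | ⟨W, ⟨S, U, hU, rfl⟩, hpW⟩
      · rw [h]; simp
      obtain ⟨⟨u, hu, rfl⟩, huY⟩ := hpW
      have : {W | W ∈ 𝒲₁ ∧ (u : X) ∈ W} ⊆ g (ρ S) '' {U | U ∈ 𝒰 (ρ S) ∧ u ∈ U} := by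
        rintro W ⟨⟨S', U', hU', rfl⟩, hpW⟩
        obtain ⟨⟨u', hu', huu⟩, -⟩ := hpW
        have hSS : S = S' := by
          by_contra hne
          have hne' : f (ρ S) ≠ f (ρ S') := by
            rw [hρ, hρ]
            exact fun h => hne (Subtype.ext h)
          have := hY _ _ hne' u ⟨u.2, huY⟩ u ⟨huu ▸ u'.2, huY⟩
          rw [dist_self] at this
          linarith
        subst hSS
        obtain rfl : u' = u := Subtype.ext huu
        exact ⟨U', ⟨hU', hu'⟩, rfl⟩
      refine (Set.encard_le_encard this).trans ((Set.encard_image_le _ _).trans ?_)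
      exact (le_iSup (fun u => {U | U ∈ 𝒰 (ρ S) ∧ u ∈ U}.encard) u).trans (hUm _)
    · rcases Set.eq_empty_or_nonempty {W | W ∈ 𝒲₂ ∧ p ∈ W} with h | ⟨W, ⟨V, hV, rfl⟩, hpW⟩
      · rw [h]; simp
      obtain ⟨y, hy, hpy⟩ := hpW
      have : {W | W ∈ 𝒲₂ ∧ p ∈ W} ⊆ fat (2 * x) x '' {V | V ∈ 𝒱 ∧ y ∈ V} := by
        rintro W ⟨⟨V', hV', rfl⟩, y', hy', hpy'⟩
        refine ⟨V', ⟨hV', hy' y ?_⟩, rfl⟩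
        have h2 : dist (y' : X) y = dist y' y := rfl
        have h3 := dist_triangle_left (y' : X) y p
        linarith
      refine (Set.encard_le_encard this).trans ((Set.encard_image_le _ _).trans ?_)
      exact (le_iSup (fun u => {U | U ∈ 𝒱 ∧ u ∈ U}.encard) y).trans hVm

/-- Union theorem for the asymptotic dimension function. -/
theorem adFun_union {X : Type*} [MetricSpace X] {ι : Type*} (Xa : ι → Set X)
    (hXcover : (⋃ i, Xa i) = Set.univ)
    (ad mY : ℝ → ℕ)
    (h : ∀ lam : ℝ, 0 < lam → ∃ B : ℝ, lam ≤ B ∧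
      (∀ i : ι, ∃ 𝒰 : Set (Set ↥(Xa i)), IsCover 𝒰 ∧
        (∀ U ∈ 𝒰, EMetric.diam U ≤ ENNReal.ofReal B) ∧
        (∃ L : ℝ, lam < L ∧ LebesgueGE 𝒰 L) ∧ mult 𝒰 ≤ (ad lam : ℕ∞)) ∧
      (∃ Y : Set X,
        (∀ i j : ι, Xa i \ Y ≠ Xa j \ Y →
          ∀ x ∈ Xa i \ Y, ∀ y ∈ Xa j \ Y, 3 * B ≤ dist x y) ∧
        (∃ 𝒱 : Set (Set ↥Y), IsCover 𝒱 ∧ UnifBounded 𝒱 ∧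
          (∃ L : ℝ, lam < L ∧ LebesgueGE 𝒱 L) ∧ mult 𝒱 ≤ (mY lam : ℕ∞)))) :
    GrowLE (adFun X) (fun lam => (max (ad lam) (mY lam) : ℕ∞)) := by
  refine ⟨5, fun x hx => ?_⟩
  have hl : 0 < ((5 : ℕ) : ℝ) * x + ((5 : ℕ) : ℝ) := by positivity
  have hl5 : 5 * x ≤ ((5 : ℕ) : ℝ) * x + ((5 : ℕ) : ℝ) := by push_cast; linarith
  generalize ((5 : ℕ) : ℝ) * x + ((5 : ℕ) : ℝ) = lam at hl hl5
  obtain ⟨B, hB, hU, Y, hY, 𝒱, -, hVB, hVL, hVm⟩ := h lam hl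
  choose 𝒰 h1 h2 h3 h4 using hU
  obtain ⟨𝒲, hc, hb, hL, hm⟩ := exists_cover Xa hXcover x lam B hx hl5 hB (ad lam) (mY lam)
    𝒰 h2 h3 h4 Y hY 𝒱 hVB hVL hVm
  have key : adFun X x ≤ (ad lam : ℕ∞) + mY lam := by
    refine tsub_le_self.trans ((sInf_le ?_).trans hm)
    exact ⟨𝒲, hc, hb, hL, rfl⟩
  refine key.trans ?_
  show (ad lam : ℕ∞) + mY lam ≤ ((5 : ℕ) : ℕ∞) * (max (ad lam : ℕ∞) (mY lam : ℕ∞)) + ((5 : ℕ) : ℕ∞)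
  rcases le_total (ad lam) (mY lam) with hle | hle
  · rw [max_eq_right (by exact_mod_cast hle)]
    norm_cast
    omega
  · rw [max_eq_left (by exact_mod_cast hle)]
    norm_cast
    omega

end AsDim
end

section
/- (Finite Union Theorem) Let X = A ∪ B be a metric space which is the union of two subsets A and B, each given the subspace metric. Then ad_X ≈ λ ↦ max{ ad_A(λ), ad_B(λ) }, i.e. the asymptotic dimension function of X has the same growth as the maximum of the asymptotic dimension functions of A and B. -/
open Metric

namespace AsDim

/-- Multiplicities of admissible covers of `X` at scale `lam`. -/
def admSet (X : Type*) [MetricSpace X] (lam : ℝ) : Set ℕ∞ :=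
  {m : ℕ∞ | ∃ 𝒰 : Set (Set X),
    IsCover 𝒰 ∧ UnifBounded 𝒰 ∧ LebesgueGE 𝒰 lam ∧ m = mult 𝒰}

lemma adFun_le_of_cover {X : Type*} [MetricSpace X] {lam : ℝ} {𝒰 : Set (Set X)}
    (h1 : IsCover 𝒰) (h2 : UnifBounded 𝒰) (h3 : LebesgueGE 𝒰 lam) :
    adFun X lam ≤ mult 𝒰 - 1 := by
  have hm : mult 𝒰 ∈ admSet X lam := ⟨𝒰, h1, h2, h3, rfl⟩
  exact tsub_le_tsub_right (sInf_le hm) 1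

lemma adFun_top_or {X : Type*} [MetricSpace X] (lam : ℝ) :
    adFun X lam = ⊤ ∨ ∃ 𝒰 : Set (Set X),
      IsCover 𝒰 ∧ UnifBounded 𝒰 ∧ LebesgueGE 𝒰 lam ∧ adFun X lam = mult 𝒰 - 1 := by
  rcases (admSet X lam).eq_empty_or_nonempty with h | h
  · left
    change sInf (admSet X lam) - 1 = ⊤
    rw [h]; simp
  · right
    obtain ⟨𝒰, h1, h2, h3, h4⟩ := csInf_mem h
    refine ⟨𝒰, h1, h2, h3, ?_⟩
    rw [← h4]; rfl

lemma adFun_subset_le {X : Type*} [MetricSpace X] (A : Set X) {l l' : ℝ} (h : l ≤ l') :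
    adFun A l ≤ adFun X l' := by
  rcases adFun_top_or (X := X) l' with h0 | ⟨𝒰, h1, ⟨D, hD, h2⟩, h3, h4⟩
  · rw [h0]; exact le_top
  rw [h4]
  let f : Set X → Set A := fun U => Subtype.val ⁻¹' U
  have hc : IsCover (f '' 𝒰) := by
    apply Set.eq_univ_of_forall
    intro a
    have : (a : X) ∈ ⋃₀ 𝒰 := by rw [h1]; trivial
    obtain ⟨U, hU, ha⟩ := this
    exact ⟨f U, ⟨U, hU, rfl⟩, ha⟩
  have hb : UnifBounded (f '' 𝒰) := by
    refine ⟨D, hD, ?_⟩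
    rintro _ ⟨U, hU, rfl⟩
    refine le_trans ?_ (h2 U hU)
    change Metric.ediam (f U) ≤ Metric.ediam U
    rw [← (isometry_subtype_coe (s := A)).ediam_image]
    exact Metric.ediam_mono (Set.image_preimage_subset _ _)
  have hl : LebesgueGE (f '' 𝒰) l := by
    intro S hS
    obtain ⟨U, hU, hSU⟩ := h3 (Subtype.val '' S) (by
      have := (isometry_subtype_coe (s := A)).ediam_image S
      exact (this.le.trans hS).trans (ENNReal.ofReal_le_ofReal h))
    exact ⟨f U, ⟨U, hU, rfl⟩, Set.image_subset_iff.1 hSU⟩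
  refine (adFun_le_of_cover hc hb hl).trans (tsub_le_tsub_right ?_ 1)
  refine iSup_le fun a => le_trans ?_ (le_iSup _ (a : X))
  refine le_trans (Set.encard_le_encard ?_) (Set.encard_image_le f _)
  rintro _ ⟨⟨U, hU, rfl⟩, ha⟩
  exact ⟨U, ⟨hU, ha⟩, rfl⟩

/-- Thickening to `X` of the deep part of a subset of `A`. -/
def thick {X : Type*} [MetricSpace X] (A : Set X) (l : ℝ) (U : Set A) : Set X :=
  {x | ∃ a : A, dist x a ≤ l ∧ Metric.closedBall a (2 * l) ⊆ U}

lemma thick_bdd {X : Type*} [MetricSpace X] (A : Set X) {l : ℝ} (hl : 0 < l)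
    {𝒰 : Set (Set A)} (h : UnifBounded 𝒰) : UnifBounded (thick A l '' 𝒰) := by
  obtain ⟨D, hD, h2⟩ := h
  refine ⟨D + 2 * l, by positivity, ?_⟩
  rintro _ ⟨U, hU, rfl⟩
  apply Metric.ediam_le
  rintro x ⟨a, hxa, ha⟩ y ⟨b, hyb, hb⟩
  have haU : a ∈ U := ha (Metric.mem_closedBall_self (by positivity))
  have hbU : b ∈ U := hb (Metric.mem_closedBall_self (by positivity))
  have hab := (Metric.edist_le_ediam_of_mem haU hbU).trans (h2 U hU)
  rw [edist_dist] at hab ⊢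
  have hab := (ENNReal.ofReal_le_ofReal_iff hD).1 hab
  apply ENNReal.ofReal_le_ofReal
  have hab : dist (a : X) b ≤ D := hab
  have := dist_triangle4 x a b y
  rw [dist_comm y] at hyb
  linarith

lemma thick_leb {X : Type*} [MetricSpace X] (A : Set X) {l l' : ℝ} (hl : 0 < l)
    (hl' : 4 * l ≤ l') {𝒰 : Set (Set A)} (h : LebesgueGE 𝒰 l') (S : Set X)
    (hS : EMetric.diam S ≤ ENNReal.ofReal l) (a : X) (haS : a ∈ S) (haA : a ∈ A) :
    ∃ V ∈ thick A l '' 𝒰, S ⊆ V := by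
  obtain ⟨U, hU, hsub⟩ := h (Metric.closedBall (⟨a, haA⟩ : A) (2 * l)) (by
    apply Metric.ediam_le
    intro x hx y hy
    rw [edist_dist]
    apply ENNReal.ofReal_le_ofReal
    have := dist_triangle_right x y ⟨a, haA⟩
    rw [Metric.mem_closedBall] at hx hy
    linarith)
  refine ⟨_, ⟨U, hU, rfl⟩, ?_⟩
  intro x hx
  refine ⟨⟨a, haA⟩, ?_, hsub⟩
  have := (Metric.edist_le_ediam_of_mem hx haS).trans hS
  rw [edist_dist] at this
  exact (ENNReal.ofReal_le_ofReal_iff hl.le).1 this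

lemma thick_mult {X : Type*} [MetricSpace X] (A : Set X) {l : ℝ}
    (𝒰 : Set (Set A)) (x : X) :
    {V | V ∈ thick A l '' 𝒰 ∧ x ∈ V}.encard ≤ mult 𝒰 := by
  by_cases hx : ∃ a : A, dist x a ≤ l
  · obtain ⟨a, ha⟩ := hx
    refine le_trans ?_ (le_iSup _ a)
    refine le_trans (Set.encard_le_encard ?_) (Set.encard_image_le (thick A l) _)
    rintro _ ⟨⟨U, hU, rfl⟩, hxU⟩
    refine ⟨U, ⟨hU, ?_⟩, rfl⟩
    obtain ⟨b, hb, hbU⟩ := hxU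
    apply hbU
    rw [Metric.mem_closedBall]
    change dist (a : X) b ≤ 2 * l
    have := dist_triangle_left (a : X) b x
    linarith
  · have : {V | V ∈ thick A l '' 𝒰 ∧ x ∈ V} = ∅ := by
      apply Set.eq_empty_of_forall_notMem
      rintro _ ⟨⟨U, hU, rfl⟩, b, hb, -⟩
      exact hx ⟨b, hb⟩
    rw [this]; simp

lemma adFun_union_le {X : Type*} [MetricSpace X] (A B : Set X)
    (hAB : A ∪ B = Set.univ) {l l' : ℝ} (hl : 0 < l) (hl' : 4 * l ≤ l') :
    adFun X l ≤ adFun A l' + adFun B l' + 1 := by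
  rcases adFun_top_or (X := A) l' with h0 | ⟨𝒰, -, hb, hL, hU⟩
  · rw [h0]; simp
  rcases adFun_top_or (X := B) l' with h0 | ⟨𝒱, -, hb', hL', hV⟩
  · rw [h0]; simp
  have hleb : LebesgueGE (thick A l '' 𝒰 ∪ thick B l '' 𝒱) l := by
    intro S hS
    rcases S.eq_empty_or_nonempty with rfl | ⟨a, ha⟩
    · obtain ⟨U, hU, -⟩ := hL ∅ (Metric.ediam_empty.trans_le zero_le)
      exact ⟨_, Or.inl ⟨U, hU, rfl⟩, Set.empty_subset _⟩
    · have : a ∈ A ∪ B := by rw [hAB]; trivial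
      rcases this with h | h
      · obtain ⟨V, hV, hs⟩ := thick_leb A hl hl' hL S hS a ha h
        exact ⟨V, Or.inl hV, hs⟩
      · obtain ⟨V, hV, hs⟩ := thick_leb B hl hl' hL' S hS a ha h
        exact ⟨V, Or.inr hV, hs⟩
  have hcov : IsCover (thick A l '' 𝒰 ∪ thick B l '' 𝒱) := by
    apply Set.eq_univ_of_forall
    intro x
    obtain ⟨V, hV, hs⟩ := hleb {x} (Metric.ediam_singleton.trans_le zero_le)
    exact ⟨V, hV, hs rfl⟩
  have hbdd : UnifBounded (thick A l '' 𝒰 ∪ thick B l '' 𝒱) := by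
    obtain ⟨D, hD, h1⟩ := thick_bdd A hl hb
    obtain ⟨E, hE, h2⟩ := thick_bdd B hl hb'
    refine ⟨max D E, le_max_of_le_left hD, ?_⟩
    rintro V (hV | hV)
    · exact (h1 V hV).trans (ENNReal.ofReal_le_ofReal (le_max_left _ _))
    · exact (h2 V hV).trans (ENNReal.ofReal_le_ofReal (le_max_right _ _))
  have hm : mult (thick A l '' 𝒰 ∪ thick B l '' 𝒱) ≤ mult 𝒰 + mult 𝒱 := by
    refine iSup_le fun x => ?_
    refine le_trans (Set.encard_le_encard ?_) ((Set.encard_union_le _ _).trans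
      (add_le_add (thick_mult A (l := l) 𝒰 x) (thick_mult B (l := l) 𝒱 x)))
    rintro V ⟨hV | hV, hx⟩
    · exact Or.inl ⟨hV, hx⟩
    · exact Or.inr ⟨hV, hx⟩
  refine (adFun_le_of_cover hcov hbdd hleb).trans ?_
  rw [tsub_le_iff_right]
  refine hm.trans ?_
  have e1 : mult 𝒰 ≤ adFun A l' + 1 := by rw [hU]; exact le_tsub_add
  have e2 : mult 𝒱 ≤ adFun B l' + 1 := by rw [hV]; exact le_tsub_add
  refine (add_le_add e1 e2).trans (le_of_eq ?_)
  ring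

/-- Finite union theorem for the asymptotic dimension function. -/
theorem adFun_union_two {X : Type*} [MetricSpace X] (A B : Set X)
    (hAB : A ∪ B = Set.univ) :
    GrowEquiv (adFun X) (fun lam => max (adFun ↥A lam) (adFun ↥B lam)) := by
  refine ⟨⟨4, fun x hx => ?_⟩, ⟨1, fun x hx => ?_⟩⟩
  · refine (adFun_union_le A B hAB hx (l' := ((4 : ℕ) : ℝ) * x + ((4 : ℕ) : ℝ))
      (by push_cast; linarith)).trans ?_
    dsimp only
    generalize adFun A _ = p
    generalize adFun B _ = q
    have h1 : p + q ≤ ((4 : ℕ) : ℕ∞) * max p q := by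
      calc p + q ≤ max p q + max p q := add_le_add (le_max_left _ _) (le_max_right _ _)
        _ = 2 * max p q := (two_mul _).symm
        _ ≤ ((4 : ℕ) : ℕ∞) * max p q := by gcongr; norm_num
    exact add_le_add h1 (by norm_num)
  · have h : x ≤ ((1 : ℕ) : ℝ) * x + ((1 : ℕ) : ℝ) := by push_cast; linarith
    have hm := max_le (adFun_subset_le A h) (adFun_subset_le B h)
    refine hm.trans ?_
    rw [Nat.cast_one (R := ℕ∞), one_mul]
    exact le_self_add

end AsDim
end

section
/- Let Γ be a group generated by a finite symmetric set S, equipped with the word metric d_S, let A ⊆ Γ be a nonempty subset, and let R > 0. Then, with both A and the R-neighborhood N_R(A) = { γ ∈ Γ : dist(γ, A) ≤ R } given the subspace metric, ad_{N_R(A)} ≈ ad_A. -/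
open Metric

namespace AsDim

/-- Pulling back covers along an additive quasi-isometric embedding. -/
theorem adFun_le_of_map {X Y : Type*} [MetricSpace X] [MetricSpace Y] (f : X → Y) (c : ℝ)
    (hc : 0 ≤ c) (h1 : ∀ x x', dist (f x) (f x') ≤ dist x x' + c)
    (h2 : ∀ x x', dist x x' ≤ dist (f x) (f x') + c) (lam lam' : ℝ) (hl : 0 < lam)
    (hll : lam + c ≤ lam') : adFun X lam ≤ adFun Y lam' := by
  have e1 : ∀ x x', edist (f x) (f x') ≤ edist x x' + ENNReal.ofReal c := by
    intro x x'
    rw [edist_dist, edist_dist, ← ENNReal.ofReal_add dist_nonneg hc]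
    exact ENNReal.ofReal_le_ofReal (h1 x x')
  have e2 : ∀ x x', edist x x' ≤ edist (f x) (f x') + ENNReal.ofReal c := by
    intro x x'
    rw [edist_dist, edist_dist, ← ENNReal.ofReal_add dist_nonneg hc]
    exact ENNReal.ofReal_le_ofReal (h2 x x')
  unfold adFun
  refine tsub_le_tsub_right ?_ 1
  refine le_sInf ?_
  rintro m ⟨V, hV, ⟨B, hB, hVB⟩, hL, rfl⟩
  refine le_trans (sInf_le ⟨(fun W => f ⁻¹' W) '' V, ?_, ?_, ?_, rfl⟩) ?_
  · refine Set.eq_univ_of_forall fun x => ?_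
    have hx : f x ∈ ⋃₀ V := by rw [hV]; trivial
    obtain ⟨W, hW, hxW⟩ := hx
    exact ⟨_, ⟨W, hW, rfl⟩, hxW⟩
  · refine ⟨B + c, by positivity, ?_⟩
    rintro _ ⟨W, hW, rfl⟩
    refine EMetric.diam_le fun x hx y hy => (e2 x y).trans ?_
    rw [ENNReal.ofReal_add hB hc]
    gcongr
    exact (EMetric.edist_le_diam_of_mem (s := W) hx hy).trans (hVB W hW)
  · intro T hT
    obtain ⟨W, hW, hTW⟩ := hL (f '' T) (by
      refine EMetric.diam_le ?_
      rintro _ ⟨x, hx, rfl⟩ _ ⟨y, hy, rfl⟩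
      refine (e1 x y).trans ?_
      refine le_trans ?_ (ENNReal.ofReal_le_ofReal hll)
      rw [ENNReal.ofReal_add hl.le hc]
      gcongr
      exact (EMetric.edist_le_diam_of_mem hx hy).trans hT)
    exact ⟨_, ⟨W, hW, rfl⟩, Set.image_subset_iff.1 hTW⟩
  · refine iSup_le fun x => ?_
    refine le_trans ?_ (le_iSup (fun y => {U | U ∈ V ∧ y ∈ U}.encard) (f x))
    refine le_trans (Set.encard_le_encard ?_)
      (Set.encard_image_le (fun W => f ⁻¹' W) {U | U ∈ V ∧ f x ∈ U})
    rintro _ ⟨⟨W, hW, rfl⟩, hx⟩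
    exact ⟨W, ⟨hW, hx⟩, rfl⟩

/-- The same, as a growth comparison. -/
theorem growLE_of_map {X Y : Type*} [MetricSpace X] [MetricSpace Y] (f : X → Y) (c : ℝ)
    (hc : 0 ≤ c) (h1 : ∀ x x', dist (f x) (f x') ≤ dist x x' + c)
    (h2 : ∀ x x', dist x x' ≤ dist (f x) (f x') + c) : GrowLE (adFun X) (adFun Y) := by
  obtain ⟨n, hn⟩ := exists_nat_ge c
  refine ⟨n + 1, fun x hx => ?_⟩
  refine (adFun_le_of_map f c hc h1 h2 x (((n + 1 : ℕ) : ℝ) * x + ((n + 1 : ℕ) : ℝ)) hx ?_).trans ?_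
  · push_cast
    have : 0 ≤ (n : ℝ) * x := by positivity
    linarith
  · refine le_trans ?_ le_self_add
    refine le_mul_of_one_le_left zero_le ?_
    push_cast
    exact le_add_self

/-- In a finitely generated group, the asymptotic dimension function of the
`R`-neighborhood of a nonempty subset has the same growth as that of the
subset itself. -/
theorem adFun_neighborhood {Γ : Type*} [Group Γ] [MetricSpace Γ]
    (S : Finset Γ) (hword : IsWordMetric S)
    (A : Set Γ) (hA : A.Nonempty) (R : ℝ) (hR : 0 < R) :
    GrowEquiv (adFun ↥{γ : Γ | Metric.infDist γ A ≤ R}) (adFun ↥A) := by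
  have key : ∀ x : ↥{γ : Γ | Metric.infDist γ A ≤ R}, ∃ a : ↥A, dist (x : Γ) a < R + 1 := by
    rintro ⟨x, hx⟩
    have hx' : Metric.infDist x A ≤ R := hx
    obtain ⟨a, ha, h⟩ := (Metric.infDist_lt_iff hA).1 (show Metric.infDist x A < R + 1 by linarith)
    exact ⟨⟨a, ha⟩, h⟩
  choose p hp using key
  constructor
  · refine growLE_of_map p (2 * (R + 1)) (by linarith) ?_ ?_
    · intro x y
      have h1 := hp x
      have h2 := hp y
      have h3 := dist_triangle4 (p x : Γ) x y (p y)
      rw [dist_comm (p x : Γ) x] at h3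
      rw [Subtype.dist_eq, Subtype.dist_eq]
      linarith
    · intro x y
      have h1 := hp x
      have h2 := hp y
      have h3 := dist_triangle4 (x : Γ) (p x) (p y) y
      rw [dist_comm (p y : Γ) y] at h3
      rw [Subtype.dist_eq, Subtype.dist_eq]
      linarith
  · refine growLE_of_map (fun a : ↥A => (⟨a, ?_⟩ : ↥{γ : Γ | Metric.infDist γ A ≤ R})) 0 le_rfl ?_ ?_
    · show Metric.infDist (a : Γ) A ≤ R
      rw [Metric.infDist_zero_of_mem a.2]
      exact hR.le
    · intro x y
      simp [Subtype.dist_eq]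
    · intro x y
      simp [Subtype.dist_eq]

end AsDim
end
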